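/- Let X be a compact topological space, T > 0, and ρ : X × (0,T) → ℝ a continuous function whose partial derivative ∂ρ/∂t exists and is continuous on X × (0,T). Define ρ_max(t) = max_{x∈X} ρ(x,t) and ρ_min(t) = min_{x∈X} ρ(x,t). Then ρ_max and ρ_min are locally Lipschitz on (0,T); moreover, for every t ∈ (0,T) at which ρ_max is differentiable and every x ∈ X with ρ(x,t) = ρ_max(t), one has ρ_max'(t) = ∂ρ/∂t(x,t), and the analogous identity holds for ρ_min at its minimizers. -/

import Mathlib

/-!
Near a given time all the functions `ρ x` share a Lipschitz constant, because `∂ρ/∂t` is bounded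
there uniformly in `x`; their supremum and infimum inherit it. If `x` is a maximizer at time `t`,
then `ρ x - ρ_max ≤ 0` near `t` with equality at `t`, so its derivative at `t` vanishes; minimizers
are treated in the same way.
-/

open Set Filter Topology
open ContinuousLinearMap (nnnorm_toSpanSingleton toSpanSingleton_inj)
open scoped NNReal

section Envelopes

variable {ι α : Type*} [Nonempty ι] [PseudoMetricSpace α] {f : ι → α → ℝ} {s : Set α} {K : ℝ≥0}

theorem lipschitzOnWith_ciSup (hf : ∀ i, LipschitzOnWith K (f i) s)
    (hbdd : ∀ a ∈ s, BddAbove (range fun i => f i a)) :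
    LipschitzOnWith K (fun a => ⨆ i, f i a) s := by
  refine .of_le_add_mul K fun a ha b hb => ciSup_le fun i => ?_
  calc f i a ≤ f i b + K * dist a b := (hf i).le_add_mul ha hb
    _ ≤ (⨆ j, f j b) + K * dist a b := by gcongr; exact le_ciSup (hbdd b hb) i

theorem lipschitzOnWith_ciInf (hf : ∀ i, LipschitzOnWith K (f i) s)
    (hbdd : ∀ a ∈ s, BddBelow (range fun i => f i a)) :
    LipschitzOnWith K (fun a => ⨅ i, f i a) s := by
  refine .of_le_add_mul K fun a ha b hb => sub_le_iff_le_add.1 <| le_ciInf fun i => ?_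
  rw [sub_le_iff_le_add]
  calc ⨅ j, f j a ≤ f i a := ciInf_le (hbdd a ha) i
    _ ≤ f i b + K * dist a b := (hf i).le_add_mul ha hb

end Envelopes

theorem hasFDerivAt_unique_of_eventuallyLE {E : Type*} [NormedAddCommGroup E] [NormedSpace ℝ E]
    {f g : E → ℝ} {f' g' : E →L[ℝ] ℝ} {a : E} (hle : f ≤ᶠ[𝓝 a] g) (heq : f a = g a)
    (hf : HasFDerivAt f f' a) (hg : HasFDerivAt g g' a) : f' = g' := by
  have hmax : IsLocalMax (f - g) a := by
    filter_upwards [hle] with b hb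
    simpa [heq] using hb
  exact sub_eq_zero.1 (hmax.hasFDerivAt_eq_zero (hf.sub hg))

theorem exists_nhds_forall_lipschitzOnWith {ι E F : Type*}
    [NormedAddCommGroup E] [NormedSpace ℝ E] [NormedAddCommGroup F] [NormedSpace ℝ F]
    {f : ι → E → F} {f' : ι → E → E →L[ℝ] F} {a : E} {C : ℝ≥0}
    (hderiv : ∀ᶠ b in 𝓝 a, ∀ i, HasFDerivAt (f i) (f' i b) b)
    (hbound : ∀ᶠ b in 𝓝 a, ∀ i, ‖f' i b‖₊ ≤ C) :
    ∃ V ∈ 𝓝 a, ∀ i, LipschitzOnWith C (f i) V := by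
  obtain ⟨ε, hε, hball⟩ := Metric.eventually_nhds_iff_ball.1 (hderiv.and hbound)
  exact ⟨Metric.ball a ε, Metric.ball_mem_nhds a hε, fun i =>
    (convex_ball a ε).lipschitzOnWith_of_nnnorm_hasFDerivWithin_le
      (fun b hb => ((hball b hb).1 i).hasFDerivWithinAt) fun b hb => (hball b hb).2 i⟩

section CompactFibers

variable {X Y G : Type*} [TopologicalSpace X] [CompactSpace X] [TopologicalSpace Y]
  {F : X → Y → G} {s : Set Y} {y : Y}

theorem isBounded_range_of_continuousOn_univ_prod [PseudoMetricSpace G]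
    (hF : ContinuousOn (fun q : X × Y => F q.1 q.2) (univ ×ˢ s)) (hy : y ∈ s) :
    Bornology.IsBounded (range fun x => F x y) :=
  (isCompact_range <| hF.comp_continuous (Continuous.prodMk_left y) fun x =>
    ⟨mem_univ x, hy⟩).isBounded

theorem exists_eventually_forall_nnnorm_le [SeminormedAddGroup G]
    (hF : ContinuousOn (fun q : X × Y => F q.1 q.2) (univ ×ˢ s)) (hs : s ∈ 𝓝 y) :
    ∃ C : ℝ≥0, ∀ᶠ z in 𝓝 y, ∀ x, ‖F x z‖₊ ≤ C := by
  obtain ⟨C, hC⟩ := (isBounded_range_of_continuousOn_univ_prod (F := fun x z => ‖F x z‖₊)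
    hF.nnnorm (mem_of_mem_nhds hs)).bddAbove
  have hnear (x : X) : ∀ᶠ q : Y × X in 𝓝 (y, x), ‖F q.2 q.1‖₊ ≤ C + 1 := by
    have hlt : ‖F x y‖₊ < C + 1 := (hC (mem_range_self x)).trans_lt (lt_add_one C)
    have hcont : ContinuousAt (fun q : X × Y => ‖F q.1 q.2‖₊) (x, y) :=
      hF.nnnorm.continuousAt (prod_mem_nhds univ_mem hs)
    have hswap : Tendsto Prod.swap (𝓝 (y, x)) (𝓝 (x, y)) := continuous_swap.tendsto (y, x)
    exact hswap.eventually (hcont.eventually_le_const hlt)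
  refine ⟨C + 1, ?_⟩
  simpa only [mem_univ, true_imp_iff] using isCompact_univ.eventually_forall_of_forall_eventually
    (P := fun z x => ‖F x z‖₊ ≤ C + 1) fun x _ => hnear x

end CompactFibers

theorem hamilton_trick_general {X E : Type*} [Nonempty X] [NormedAddCommGroup E] [NormedSpace ℝ E]
    {U : Set E} (hU : IsOpen U) {ρ : X → E → ℝ} {ρ' : X → E → E →L[ℝ] ℝ}
    (hbdd : ∀ t ∈ U, Bornology.IsBounded (range fun x => ρ x t))
    (hderiv : ∀ x, ∀ t ∈ U, HasFDerivAt (ρ x) (ρ' x t) t)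
    (hbound : ∀ t ∈ U, ∃ C : ℝ≥0, ∀ᶠ s in 𝓝 t, ∀ x, ‖ρ' x s‖₊ ≤ C) :
    let ρmax : E → ℝ := fun t => ⨆ x, ρ x t
    let ρmin : E → ℝ := fun t => ⨅ x, ρ x t
    (∀ t ∈ U, ∃ K : ℝ≥0, ∃ V ∈ 𝓝[U] t, LipschitzOnWith K ρmax V ∧ LipschitzOnWith K ρmin V) ∧
    (∀ t ∈ U, DifferentiableAt ℝ ρmax t → ∀ x, ρ x t = ρmax t → fderiv ℝ ρmax t = ρ' x t) ∧
    (∀ t ∈ U, DifferentiableAt ℝ ρmin t → ∀ x, ρ x t = ρmin t → fderiv ℝ ρmin t = ρ' x t) := by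
  intro ρmax ρmin
  have hle_max (x : X) {t : E} (ht : t ∈ U) : ρ x t ≤ ρmax t := le_ciSup (hbdd t ht).bddAbove x
  have hmin_le (x : X) {t : E} (ht : t ∈ U) : ρmin t ≤ ρ x t := ciInf_le (hbdd t ht).bddBelow x
  refine ⟨fun t ht => ?_, fun t ht hd x hx => ?_, fun t ht hd x hx => ?_⟩
  · obtain ⟨C, hC⟩ := hbound t ht
    have hderiv_near : ∀ᶠ s in 𝓝 t, ∀ x, HasFDerivAt (ρ x) (ρ' x s) s := by
      filter_upwards [hU.mem_nhds ht] with s hs x using hderiv x s hs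
    obtain ⟨V, hV, hlip⟩ := exists_nhds_forall_lipschitzOnWith hderiv_near hC
    have hlip_inter (x : X) : LipschitzOnWith C (ρ x) (U ∩ V) := (hlip x).mono inter_subset_right
    exact ⟨C, U ∩ V, inter_mem_nhdsWithin U hV,
      lipschitzOnWith_ciSup hlip_inter fun s hs => (hbdd s hs.1).bddAbove,
      lipschitzOnWith_ciInf hlip_inter fun s hs => (hbdd s hs.1).bddBelow⟩
  · have hle : ρ x ≤ᶠ[𝓝 t] ρmax := (hU.eventually_mem ht).mono fun _ => hle_max x
    exact (hasFDerivAt_unique_of_eventuallyLE hle hx (hderiv x t ht) hd.hasFDerivAt).symm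
  · have hle : ρmin ≤ᶠ[𝓝 t] ρ x := (hU.eventually_mem ht).mono fun _ => hmin_le x
    exact hasFDerivAt_unique_of_eventuallyLE hle hx.symm hd.hasFDerivAt (hderiv x t ht)

/-- Hamilton's trick: if `X` is a compact space and `ρ : X × (0,T) → ℝ` is continuous with
continuous time derivative `∂ρ/∂t`, then `ρ_max(t) = max_x ρ(x,t)` and
`ρ_min(t) = min_x ρ(x,t)` are locally Lipschitz on `(0,T)`, and at every time `t` where
`ρ_max` (resp. `ρ_min`) is differentiable and every point `x` realizing the maximum
(resp. minimum), `ρ_max'(t) = ∂ρ/∂t(x,t)` (resp. for `ρ_min`). -/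
theorem hamilton_trick {X : Type*} [TopologicalSpace X] [CompactSpace X] [Nonempty X]
    (T : ℝ) (hT : 0 < T) (ρ ρt : X → ℝ → ℝ)
    (hcont : ContinuousOn (fun q : X × ℝ => ρ q.1 q.2) (Set.univ ×ˢ Set.Ioo 0 T))
    (hderiv : ∀ x, ∀ t ∈ Set.Ioo (0 : ℝ) T, HasDerivAt (ρ x) (ρt x t) t)
    (htcont : ContinuousOn (fun q : X × ℝ => ρt q.1 q.2) (Set.univ ×ˢ Set.Ioo 0 T)) :
    let ρmax : ℝ → ℝ := fun t => ⨆ x, ρ x t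
    let ρmin : ℝ → ℝ := fun t => ⨅ x, ρ x t
    (∀ t ∈ Set.Ioo (0 : ℝ) T, ∃ K : NNReal, ∃ U ∈ nhdsWithin t (Set.Ioo 0 T),
      LipschitzOnWith K ρmax U ∧ LipschitzOnWith K ρmin U) ∧
    (∀ t ∈ Set.Ioo (0 : ℝ) T, DifferentiableAt ℝ ρmax t →
      ∀ x, ρ x t = ρmax t → deriv ρmax t = ρt x t) ∧
    (∀ t ∈ Set.Ioo (0 : ℝ) T, DifferentiableAt ℝ ρmin t →
      ∀ x, ρ x t = ρmin t → deriv ρmin t = ρt x t) := by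
  obtain ⟨hlip, hmax, hmin⟩ := hamilton_trick_general isOpen_Ioo
    (fun _ ht => isBounded_range_of_continuousOn_univ_prod hcont ht)
    (fun x t ht => (hderiv x t ht).hasFDerivAt)
    (fun _ ht => by simpa only [nnnorm_toSpanSingleton] using
      exists_eventually_forall_nnnorm_le htcont (isOpen_Ioo.mem_nhds ht))
  exact ⟨hlip,
    fun t ht hd x hx => toSpanSingleton_inj.1 (toSpanSingleton_deriv.trans (hmax t ht hd x hx)),
    fun t ht hd x hx => toSpanSingleton_inj.1 (toSpanSingleton_deriv.trans (hmin t ht hd x hx))⟩
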